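/- Under the permutation null distribution, for n ≥ 6 and 1 ≤ t ≤ n−1, the third moment of the between-group edge count satisfies E[R_G(t)³] = p1(t)|G| + (3/2)p1(t)·Σ_i |G_i|(|G_i|−1) + 3p2(t)·(|G|(|G|−1) + (1/2)Σ_i |G_i|(|G_i|−1)(|G|−|G_i|)) − 3p2(t)·(Σ_i |G_i|(|G_i|−1) + Σ_{(i,j)∈G} (|G_i|−1)(|G_j|−1)) + p3(t)·Σ_i |G_i|(|G_i|−1)(|G_i|−2) + p4(t)·(|G|(|G|−1)(|G|−2) + 6·Σ_{(i,j)∈G} (|G_i|−1)(|G_j|−1)) − 2p4(t)·Σ_{(i,j)∈G} |{k : (i,k) ∈ G and (j,k) ∈ G}| − p4(t)·Σ_i |G_i|(|G_i|−1)(3|G|−2|G_i|−2), where p3(t) = t(n−t)((n−t−1)(n−t−2)+(t−1)(t−2))/(n(n−1)(n−2)(n−3)) and p4(t) = 8t(t−1)(t−2)(n−t)(n−t−1)(n−t−2)/(n(n−1)(n−2)(n−3)(n−4)(n−5)). -/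

import Mathlib

open Finset Filter Asymptotics MeasureTheory Topology ProbabilityTheory

namespace GraphCP

noncomputable def edgeFS {n : ℕ} (G : SimpleGraph (Fin n)) : Finset (Sym2 (Fin n)) :=
  letI : DecidableRel G.Adj := Classical.decRel _
  G.edgeFinset

noncomputable def deg {n : ℕ} (G : SimpleGraph (Fin n)) (i : Fin n) : ℕ :=
  letI : DecidableRel G.Adj := Classical.decRel _
  G.degree i

/-- Indicator that the two endpoints of an edge lie in different groups. -/
def crossInd {n : ℕ} (g : Fin n → Bool) : Sym2 (Fin n) → ℝ :=
  Sym2.lift ⟨fun i j => if g i ≠ g j then 1 else 0, by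
    intro i j
    by_cases h : g i = g j <;> simp [h, Ne, eq_comm]⟩

/-- `g_i(t) = 1{π(i) > t}`, where the label of `i` is `π(i) = (f i).val + 1 ∈ {1,…,n}`. -/
def gOne (n t : ℕ) (f : Fin n → Fin n) (i : Fin n) : Bool :=
  decide (t < (f i : ℕ) + 1)

/-- `g_i(t₁,t₂) = 1{t₁ < π(i) ≤ t₂}`. -/
def gTwo (n t₁ t₂ : ℕ) (f : Fin n → Fin n) (i : Fin n) : Bool :=
  decide (t₁ < (f i : ℕ) + 1 ∧ (f i : ℕ) + 1 ≤ t₂)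

noncomputable def RoneF {n : ℕ} (G : SimpleGraph (Fin n)) (t : ℕ) (f : Fin n → Fin n) : ℝ :=
  ∑ e ∈ edgeFS G, crossInd (gOne n t f) e

noncomputable def Rone {n : ℕ} (G : SimpleGraph (Fin n)) (t : ℕ) (π : Equiv.Perm (Fin n)) : ℝ :=
  RoneF G t ⇑π

noncomputable def Rtwo {n : ℕ} (G : SimpleGraph (Fin n)) (t₁ t₂ : ℕ)
    (π : Equiv.Perm (Fin n)) : ℝ :=
  ∑ e ∈ edgeFS G, crossInd (gTwo n t₁ t₂ ⇑π) e

noncomputable def permExp (n : ℕ) (X : Equiv.Perm (Fin n) → ℝ) : ℝ :=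
  (∑ π : Equiv.Perm (Fin n), X π) / (Nat.factorial n : ℝ)

noncomputable def permVar (n : ℕ) (X : Equiv.Perm (Fin n) → ℝ) : ℝ :=
  permExp n (fun π => (X π - permExp n X) ^ 2)

noncomputable def permCov (n : ℕ) (X Y : Equiv.Perm (Fin n) → ℝ) : ℝ :=
  permExp n (fun π => (X π - permExp n X) * (Y π - permExp n Y))

noncomputable def p1 (n t : ℕ) : ℝ := 2 * t * ((n : ℝ) - t) / ((n : ℝ) * ((n : ℝ) - 1))

noncomputable def p2 (n t : ℕ) : ℝ :=
  4 * t * ((t : ℝ) - 1) * ((n : ℝ) - t) * ((n : ℝ) - t - 1) /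
    ((n : ℝ) * ((n : ℝ) - 1) * ((n : ℝ) - 2) * ((n : ℝ) - 3))

noncomputable def numEdges {n : ℕ} (G : SimpleGraph (Fin n)) : ℝ := ((edgeFS G).card : ℝ)

noncomputable def degSq {n : ℕ} (G : SimpleGraph (Fin n)) : ℝ :=
  ∑ i : Fin n, (deg G i : ℝ) ^ 2

noncomputable def Zone {n : ℕ} (G : SimpleGraph (Fin n)) (t : ℕ) (π : Equiv.Perm (Fin n)) : ℝ :=
  -(Rone G t π - permExp n (Rone G t)) / Real.sqrt (permVar n (Rone G t))

noncomputable def Ztwo {n : ℕ} (G : SimpleGraph (Fin n)) (t₁ t₂ : ℕ)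
    (π : Equiv.Perm (Fin n)) : ℝ :=
  -(Rtwo G t₁ t₂ π - permExp n (Rtwo G t₁ t₂)) / Real.sqrt (permVar n (Rtwo G t₁ t₂))


noncomputable def p3 (n t : ℕ) : ℝ :=
  t * ((n : ℝ) - t) * (((n : ℝ) - t - 1) * ((n : ℝ) - t - 2) + ((t : ℝ) - 1) * ((t : ℝ) - 2)) /
    ((n : ℝ) * ((n : ℝ) - 1) * ((n : ℝ) - 2) * ((n : ℝ) - 3))

noncomputable def p4 (n t : ℕ) : ℝ :=
  8 * t * ((t : ℝ) - 1) * ((t : ℝ) - 2) * ((n : ℝ) - t) * ((n : ℝ) - t - 1) * ((n : ℝ) - t - 2) /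
    ((n : ℝ) * ((n : ℝ) - 1) * ((n : ℝ) - 2) * ((n : ℝ) - 3) * ((n : ℝ) - 4) * ((n : ℝ) - 5))

/-- `Σ_{(i,j)∈G} (|Gᵢ|−1)(|Gⱼ|−1)`, summed over the edges of `G`. -/
noncomputable def edgeDegProd {n : ℕ} (G : SimpleGraph (Fin n)) : ℝ :=
  ∑ e ∈ edgeFS G,
    Sym2.lift ⟨fun i j => ((deg G i : ℝ) - 1) * ((deg G j : ℝ) - 1), fun i j => by ring⟩ e

noncomputable def nbrFS {n : ℕ} (G : SimpleGraph (Fin n)) (i : Fin n) : Finset (Fin n) :=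
  letI : DecidableRel G.Adj := Classical.decRel _
  G.neighborFinset i

/-- `Σ_{(i,j)∈G} |{k : (i,k) ∈ G and (j,k) ∈ G}|`, the number of common neighbours summed
over the edges of `G`. -/
noncomputable def edgeCommonNbr {n : ℕ} (G : SimpleGraph (Fin n)) : ℝ :=
  ∑ e ∈ edgeFS G,
    Sym2.lift ⟨fun i j => ((nbrFS G i ∩ nbrFS G j).card : ℝ),
      fun i j => by simp only []; rw [Finset.inter_comm]⟩ e

/-!
Give the two groups the signs `±1`, so that an edge `e` is cut exactly when the product `x_e` of
the signs of its endpoints is `-1`, and `R_G(t) = ∑ₑ (1 - x_e) / 2`. Since signs square to `1`,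
a product `x_e x_f x_g` is the product of the signs over the symmetric difference `e ∆ f ∆ g`, and
its mean under a random permutation depends only on the size of that set, which is `0`, `2`, `4` or
`6`; as a function of the size this mean satisfies a three-term recurrence, obtained by toggling
one vertex. So it remains to count the triples of edges by the size of `e ∆ f ∆ g`. Size `0` means
that `e`, `f`, `g` form a triangle, and the other three counts are determined by the total number
of triples and the first two moments of the size. These moments come from expanding the powers of
`|V| - 2 |e ∆ f ∆ g| = ∑ᵥ ε_e(v) ε_f(v) ε_g(v)`, where `ε_e` is `-1` on `e` and `1` elsewhere, and
exchanging the order of summation.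
-/

open scoped symmDiff BigOperators

section Signs

variable {V : Type*} [DecidableEq V]

/-- The `±1`-valued indicator of a set, with the value `-1` on the set: with this sign
convention symmetric differences of sets become products of indicators. -/
def memSign (A : Finset V) (v : V) : ℝ := if v ∈ A then -1 else 1

lemma memSign_mul_self (A : Finset V) (v : V) : memSign A v * memSign A v = 1 := by
  unfold memSign; split_ifs <;> norm_num

lemma memSign_eq_one_sub (A : Finset V) (v : V) :
    memSign A v = 1 - 2 * if v ∈ A then 1 else 0 := by
  unfold memSign; split_ifs <;> norm_num

lemma memSign_symmDiff (A B : Finset V) (v : V) :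
    memSign (A ∆ B) v = memSign A v * memSign B v := by
  by_cases hA : v ∈ A <;> by_cases hB : v ∈ B <;> simp [memSign, mem_symmDiff, hA, hB]

lemma sum_memSign [Fintype V] (A : Finset V) :
    ∑ v, memSign A v = Fintype.card V - 2 * #A := by
  simp [memSign_eq_one_sub, mul_comm]

lemma prod_symmDiff_of_mul_self_eq_one {M : Type*} [CommMonoid M] {x : V → M}
    (hx : ∀ v, x v * x v = 1) (S T : Finset V) :
    ∏ v ∈ S ∆ T, x v = (∏ v ∈ S, x v) * ∏ v ∈ T, x v := by
  have hST : (∏ v ∈ S ∩ T, x v) * ∏ v ∈ S ∩ T, x v = 1 := by simp [← prod_mul_distrib, hx]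
  rw [symmDiff_def, sup_eq_union, prod_union disjoint_sdiff_sdiff,
    ← prod_inter_mul_prod_sdiff S T, ← prod_inter_mul_prod_sdiff T S, inter_comm T S,
    mul_mul_mul_comm, hST, one_mul]

end Signs

section SetFamily

lemma sum_pow_two_eq_sum_product {ι R : Type*} [Semiring R] (s : Finset ι) (f : ι → R) :
    (∑ i ∈ s, f i) ^ 2 = ∑ p ∈ s ×ˢ s, f p.1 * f p.2 := by
  rw [sq, sum_mul_sum, ← sum_product']

lemma sum_pow_three_eq_sum_product {ι R : Type*} [Semiring R] (s : Finset ι) (f : ι → R) :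
    (∑ i ∈ s, f i) ^ 3 = ∑ p ∈ s ×ˢ s ×ˢ s, f p.1 * f p.2.1 * f p.2.2 := by
  simp only [pow_succ' _ 2, sum_pow_two_eq_sum_product, sum_mul_sum, ← sum_product', mul_assoc]

variable {ι V : Type*} [DecidableEq V] (s : Finset ι) (A : ι → Finset V)

lemma sum_memSign_index (v : V) :
    ∑ i ∈ s, memSign (A i) v = #s - 2 * #{i ∈ s | v ∈ A i} := by
  simp only [memSign_eq_one_sub, sum_sub_distrib, sum_const, nsmul_one, ← mul_sum, sum_boole]

lemma sum_memSign_mul_memSign_index (u v : V) :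
    ∑ i ∈ s, memSign (A i) u * memSign (A i) v =
      #s - 2 * (#{i ∈ s | u ∈ A i} + #{i ∈ s | v ∈ A i}) + 4 * #{i ∈ s | u ∈ A i ∧ v ∈ A i} := by
  have expand (i : ι) : memSign (A i) u * memSign (A i) v =
      1 - 2 * ((if u ∈ A i then 1 else 0) + if v ∈ A i then 1 else 0) +
        4 * if u ∈ A i ∧ v ∈ A i then 1 else 0 := by
    rw [memSign_eq_one_sub, memSign_eq_one_sub, ite_and]
    split_ifs <;> norm_num
  simp only [expand, sum_add_distrib, sum_sub_distrib, ← mul_sum, sum_const, nsmul_one, sum_boole]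

variable [Fintype V]

lemma sum_card_sub_two_mul_card_symmDiff :
    ∑ p ∈ s ×ˢ s, ((Fintype.card V : ℝ) - 2 * #(A p.1 ∆ A p.2)) =
      ∑ v, (∑ i ∈ s, memSign (A i) v) ^ 2 := by
  simp only [← sum_memSign, memSign_symmDiff, sum_pow_two_eq_sum_product]
  exact sum_comm

lemma sum_card_sub_two_mul_card_symmDiff_symmDiff :
    ∑ p ∈ s ×ˢ s ×ˢ s, ((Fintype.card V : ℝ) - 2 * #(A p.1 ∆ A p.2.1 ∆ A p.2.2)) =
      ∑ v, (∑ i ∈ s, memSign (A i) v) ^ 3 := by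
  simp only [← sum_memSign, memSign_symmDiff, sum_pow_three_eq_sum_product]
  exact sum_comm

lemma sum_card_sub_two_mul_card_symmDiff_symmDiff_sq :
    ∑ p ∈ s ×ˢ s ×ˢ s, ((Fintype.card V : ℝ) - 2 * #(A p.1 ∆ A p.2.1 ∆ A p.2.2)) ^ 2 =
      ∑ u, ∑ v, (∑ i ∈ s, memSign (A i) u * memSign (A i) v) ^ 3 := by
  simp only [← sum_memSign, memSign_symmDiff, sq, sum_mul_sum, sum_pow_three_eq_sum_product]
  rw [sum_comm]
  refine sum_congr rfl fun u _ => ?_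
  rw [sum_comm]
  exact sum_congr rfl fun v _ => sum_congr rfl fun p _ => by ring

end SetFamily

section MeanProd

variable {V : Type*} [Fintype V]

/-- The mean of `∏ v ∈ S, x v` over the `k`-element sets `S`, i.e. the `k`-th elementary
symmetric polynomial of `x` divided by the number of its terms. -/
noncomputable def meanProd (x : V → ℝ) (k : ℕ) : ℝ :=
  𝔼 S ∈ powersetCard k (univ : Finset V), ∏ v ∈ S, x v

lemma meanProd_zero (x : V → ℝ) : meanProd x 0 = 1 := by
  simp [meanProd]

lemma expect_perm_prod_map [DecidableEq V] (x : V → ℝ) (S : Finset V) (σ : Equiv.Perm V) :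
    𝔼 π : Equiv.Perm V, ∏ v ∈ S.map σ.toEmbedding, x (π v) =
      𝔼 π : Equiv.Perm V, ∏ v ∈ S, x (π v) :=
  Fintype.expect_equiv (Equiv.mulRight σ) _ _ fun π => by simp [prod_map]

lemma expect_perm_prod [DecidableEq V] (x : V → ℝ) (S : Finset V) :
    𝔼 π : Equiv.Perm V, ∏ v ∈ S, x (π v) = meanProd x #S := by
  have hS : (powersetCard #S (univ : Finset V)).Nonempty := ⟨S, by simp⟩
  have orbit (T : Finset V) (hT : T ∈ powersetCard #S univ) :
      𝔼 π : Equiv.Perm V, ∏ v ∈ T, x (π v) = 𝔼 π : Equiv.Perm V, ∏ v ∈ S, x (π v) := by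
    obtain ⟨σ, rfl⟩ := Equiv.Perm.exists_map_finset_eq S T (mem_powersetCard_univ.1 hT).symm
    exact expect_perm_prod_map x S σ
  have relabel (π : Equiv.Perm V) :
      𝔼 T ∈ powersetCard #S univ, ∏ v ∈ T, x (π v) = meanProd x #S :=
    expect_equiv π.finsetCongr (by simp) (by simp [prod_map])
  calc 𝔼 π : Equiv.Perm V, ∏ v ∈ S, x (π v)
      = 𝔼 T ∈ powersetCard #S univ, 𝔼 π : Equiv.Perm V, ∏ v ∈ T, x (π v) := by
        rw [expect_congr rfl orbit, expect_const hS]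
    _ = 𝔼 _π : Equiv.Perm V, meanProd x #S := by
        rw [expect_comm, expect_congr rfl fun π _ => relabel π]
    _ = meanProd x #S := Fintype.expect_const _

-- `k - 1` truncates at `k = 0`
lemma meanProd_recurrence {x : V → ℝ} (hx : ∀ v, x v * x v = 1) {k : ℕ}
    (hk : k ≤ Fintype.card V) :
    (Fintype.card V - k) * meanProd x (k + 1) + k * meanProd x (k - 1) =
      (∑ v, x v) * meanProd x k := by
  classical
  obtain ⟨S, -, rfl⟩ := exists_subset_card_eq (s := (univ : Finset V)) hk
  have hmem : ∀ v ∈ S, meanProd x #(S ∆ {v}) = meanProd x (#S - 1) := fun v hv => by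
    have : S ∆ {v} = S.erase v := by grind [mem_symmDiff]
    rw [this, card_erase_of_mem hv]
  have hnotMem : ∀ v ∈ Sᶜ, meanProd x #(S ∆ {v}) = meanProd x (#S + 1) := fun v hv => by
    have hvS : v ∉ S := mem_compl.1 hv
    have : S ∆ {v} = insert v S := by grind [mem_symmDiff]
    rw [this, card_insert_of_notMem hvS]
  calc (Fintype.card V - #S) * meanProd x (#S + 1) + #S * meanProd x (#S - 1)
      = ∑ v, meanProd x #(S ∆ {v}) := by
        rw [← sum_compl_add_sum S, sum_congr rfl hmem, sum_congr rfl hnotMem, sum_const, sum_const,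
          nsmul_eq_mul, nsmul_eq_mul, card_compl, Nat.cast_sub hk]
    _ = 𝔼 π : Equiv.Perm V, ∑ v, ∏ w ∈ S ∆ {v}, x (π w) := by
        rw [expect_sum_comm]
        simp only [expect_perm_prod]
    _ = 𝔼 π : Equiv.Perm V, (∑ v, x v) * ∏ w ∈ S, x (π w) := by
        refine expect_congr rfl fun π _ => ?_
        simp only [prod_symmDiff_of_mul_self_eq_one fun v => hx (π v), prod_singleton]
        rw [← mul_sum, Equiv.sum_comp π x, mul_comm]
    _ = (∑ v, x v) * meanProd x #S := by rw [← mul_expect, expect_perm_prod]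

variable [DecidableEq V] {ι : Type*} (s : Finset ι) (A : ι → Finset V)

lemma expect_perm_sum_prod (x : V → ℝ) :
    𝔼 π : Equiv.Perm V, ∑ i ∈ s, ∏ v ∈ A i, x (π v) = ∑ i ∈ s, meanProd x #(A i) := by
  simp only [expect_sum_comm, expect_perm_prod]

lemma expect_perm_sum_prod_sq {x : V → ℝ} (hx : ∀ v, x v * x v = 1) :
    𝔼 π : Equiv.Perm V, (∑ i ∈ s, ∏ v ∈ A i, x (π v)) ^ 2 =
      ∑ p ∈ s ×ˢ s, meanProd x #(A p.1 ∆ A p.2) := by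
  simp only [← expect_perm_prod, prod_symmDiff_of_mul_self_eq_one fun _ => hx _,
    sum_pow_two_eq_sum_product, expect_sum_comm]

lemma expect_perm_sum_prod_cube {x : V → ℝ} (hx : ∀ v, x v * x v = 1) :
    𝔼 π : Equiv.Perm V, (∑ i ∈ s, ∏ v ∈ A i, x (π v)) ^ 3 =
      ∑ p ∈ s ×ˢ s ×ˢ s, meanProd x #(A p.1 ∆ A p.2.1 ∆ A p.2.2) := by
  simp only [← expect_perm_prod, prod_symmDiff_of_mul_self_eq_one fun _ => hx _,
    sum_pow_three_eq_sum_product, expect_sum_comm]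

end MeanProd

section GraphSums

variable {V : Type*} [Fintype V] (G : SimpleGraph V) [DecidableRel G.Adj]

/-- The sum of the `k`-th powers of the degrees of `G`. -/
def degPowSum (k : ℕ) : ℝ := ∑ v, (G.degree v : ℝ) ^ k

/-- `∑ (deg u - 1) (deg v - 1)` over the ordered pairs of adjacent vertices `u`, `v`. -/
def dartDegProd : ℝ :=
  ∑ u, ∑ v ∈ G.neighborFinset u, ((G.degree u : ℝ) - 1) * ((G.degree v : ℝ) - 1)

lemma sum_degree_pow (k : ℕ) : ∑ v, (G.degree v : ℝ) ^ k = degPowSum G k := rfl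

lemma degPowSum_zero : degPowSum G 0 = Fintype.card V := by
  simp [degPowSum]

lemma degPowSum_one : degPowSum G 1 = 2 * #G.edgeFinset := by
  simp only [degPowSum, pow_one]
  exact_mod_cast G.sum_degrees_eq_twice_card_edges

lemma sum_degree_mul_degree_sub_one :
    ∑ v, (G.degree v : ℝ) * ((G.degree v : ℝ) - 1) = degPowSum G 2 - 2 * #G.edgeFinset := by
  rw [← degPowSum_one]
  simp only [degPowSum, ← sum_sub_distrib]
  exact sum_congr rfl fun v _ => by ring

variable {G} in
lemma sum_degree_mul_degree_sub_one_mul_of_affine {f : ℝ → ℝ} {a b : ℝ}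
    (hf : ∀ x, f x = a + b * x) :
    ∑ v, (G.degree v : ℝ) * ((G.degree v : ℝ) - 1) * f (G.degree v) =
      a * (degPowSum G 2 - 2 * #G.edgeFinset) + b * (degPowSum G 3 - degPowSum G 2) := by
  rw [← sum_degree_mul_degree_sub_one]
  simp only [hf, degPowSum, ← sum_sub_distrib, mul_sum, ← sum_add_distrib]
  exact sum_congr rfl fun v _ => by ring

lemma sum_neighborFinset_degree_pow_fst (k : ℕ) :
    ∑ u, ∑ _v ∈ G.neighborFinset u, (G.degree u : ℝ) ^ k = degPowSum G (k + 1) := by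
  simp [degPowSum, pow_succ']

lemma sum_neighborFinset_degree_pow_snd (k : ℕ) :
    ∑ u, ∑ v ∈ G.neighborFinset u, (G.degree v : ℝ) ^ k = degPowSum G (k + 1) := by
  rw [← sum_neighborFinset_degree_pow_fst]
  exact sum_comm' (by simp [G.adj_comm])

lemma sum_neighborFinset_sym2 {M : Type*} [AddCommMonoid M] (h : Sym2 V → M) :
    ∑ u, ∑ v ∈ G.neighborFinset u, h s(u, v) = 2 • ∑ e ∈ G.edgeFinset, h e := by
  classical
  calc ∑ u, ∑ v ∈ G.neighborFinset u, h s(u, v)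
      = ∑ d : G.Dart, h d.edge := by
        rw [sum_sigma']
        exact sum_bij' (fun p hp => ⟨(p.1, p.2), by simpa using hp⟩) (fun d _ => ⟨d.fst, d.snd⟩)
          (by simp) (by simp) (by simp) (by simp) (by simp [SimpleGraph.Dart.edge])
    _ = ∑ e ∈ G.edgeFinset, ∑ d : G.Dart with d.edge = e, h e := by
        exact (sum_fiberwise_of_maps_to' (by simp) h).symm
    _ = 2 • ∑ e ∈ G.edgeFinset, h e := by
        rw [smul_sum]
        refine sum_congr rfl fun e he => ?_
        rw [sum_const, G.dart_edge_fiber_card e (SimpleGraph.mem_edgeFinset.1 he)]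

lemma sum_neighborFinset_degree_add_degree_quadratic (a b c : ℝ) :
    ∑ u, ∑ v ∈ G.neighborFinset u,
      (a + b * ((G.degree u : ℝ) + G.degree v) + c * ((G.degree u : ℝ) + G.degree v) ^ 2) =
      2 * a * #G.edgeFinset + 2 * b * degPowSum G 2 +
        c * (2 * degPowSum G 3 + 4 * degPowSum G 2 - 4 * #G.edgeFinset + 2 * dartDegProd G) := by
  have expand (x y : ℝ) :
      a + b * (x + y) + c * (x + y) ^ 2 - 2 * c * ((x - 1) * (y - 1)) =
        (a - 2 * c) * x ^ 0 + (b + 2 * c) * (x ^ 1 + y ^ 1) + c * (x ^ 2 + y ^ 2) := by ring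
  suffices h : ∑ u, ∑ v ∈ G.neighborFinset u,
      (a + b * ((G.degree u : ℝ) + G.degree v) + c * ((G.degree u : ℝ) + G.degree v) ^ 2) -
        2 * c * dartDegProd G =
      2 * a * #G.edgeFinset + 2 * b * degPowSum G 2 +
        c * (2 * degPowSum G 3 + 4 * degPowSum G 2 - 4 * #G.edgeFinset) by
    linear_combination h
  rw [dartDegProd]
  simp only [mul_sum, ← sum_sub_distrib, expand]
  simp only [sum_add_distrib, ← mul_sum, sum_neighborFinset_degree_pow_fst,
    sum_neighborFinset_degree_pow_snd, zero_add, degPowSum_one]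
  ring

lemma sum_sum_sub_degree_add_degree_cube (m : ℝ) :
    ∑ u, ∑ v, (m - 2 * ((G.degree u : ℝ) + G.degree v)) ^ 3 =
      Fintype.card V ^ 2 * m ^ 3 - 24 * Fintype.card V * #G.edgeFinset * m ^ 2 +
        24 * (Fintype.card V * degPowSum G 2 + 4 * #G.edgeFinset ^ 2) * m -
        16 * (Fintype.card V * degPowSum G 3 + 6 * #G.edgeFinset * degPowSum G 2) := by
  have expand (x y : ℝ) : (m - 2 * (x + y)) ^ 3 =
      m ^ 3 * (x ^ 0 * y ^ 0) - 6 * m ^ 2 * (x ^ 1 * y ^ 0 + x ^ 0 * y ^ 1) +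
        12 * m * (x ^ 2 * y ^ 0 + 2 * (x ^ 1 * y ^ 1) + x ^ 0 * y ^ 2) -
        8 * (x ^ 3 * y ^ 0 + 3 * (x ^ 2 * y ^ 1) + 3 * (x ^ 1 * y ^ 2) + x ^ 0 * y ^ 3) := by ring
  simp only [expand, sum_sub_distrib, sum_add_distrib, ← mul_sum, ← sum_mul, sum_degree_pow,
    degPowSum_zero, degPowSum_one]
  ring

end GraphSums

section EdgeSigns

variable {V : Type*} [Fintype V] [DecidableEq V] (G : SimpleGraph V) [DecidableRel G.Adj]

lemma card_filter_mem_edgeFinset (v : V) :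
    #{e ∈ G.edgeFinset | v ∈ e.toFinset} = G.degree v := by
  simp only [Sym2.mem_toFinset, ← G.incidenceFinset_eq_filter, G.card_incidenceFinset_eq_degree]

lemma card_filter_mem_and_mem_edgeFinset {u v : V} (huv : u ≠ v) :
    #{e ∈ G.edgeFinset | u ∈ e.toFinset ∧ v ∈ e.toFinset} =
      if v ∈ G.neighborFinset u then 1 else 0 := by
  simp only [Sym2.mem_toFinset, Sym2.mem_and_mem_iff huv, filter_eq',
    SimpleGraph.mem_edgeFinset, SimpleGraph.mem_edgeSet, SimpleGraph.mem_neighborFinset]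
  split_ifs <;> rfl

lemma sum_edgeFinset_memSign (v : V) :
    ∑ e ∈ G.edgeFinset, memSign e.toFinset v = #G.edgeFinset - 2 * G.degree v := by
  rw [sum_memSign_index, card_filter_mem_edgeFinset]

lemma sum_edgeFinset_memSign_mul_memSign {u v : V} (huv : u ≠ v) :
    ∑ e ∈ G.edgeFinset, memSign e.toFinset u * memSign e.toFinset v =
      #G.edgeFinset - 2 * ((G.degree u : ℝ) + G.degree v) +
        4 * if v ∈ G.neighborFinset u then 1 else 0 := by
  rw [sum_memSign_mul_memSign_index, card_filter_mem_edgeFinset, card_filter_mem_edgeFinset,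
    card_filter_mem_and_mem_edgeFinset G huv, Nat.cast_ite, Nat.cast_one, Nat.cast_zero]

lemma sum_edgeFinset_memSign_mul_memSign_cube (u v : V) :
    (∑ e ∈ G.edgeFinset, memSign e.toFinset u * memSign e.toFinset v) ^ 3 =
      (#G.edgeFinset - 2 * ((G.degree u : ℝ) + G.degree v)) ^ 3 +
      (if u = v then (#G.edgeFinset : ℝ) ^ 3 - (#G.edgeFinset - 4 * (G.degree v : ℝ)) ^ 3 else 0) +
      (if v ∈ G.neighborFinset u then
        (#G.edgeFinset - 2 * ((G.degree u : ℝ) + G.degree v) + 4) ^ 3 -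
          (#G.edgeFinset - 2 * ((G.degree u : ℝ) + G.degree v)) ^ 3 else 0) := by
  rcases eq_or_ne u v with rfl | huv
  · simp only [memSign_mul_self, sum_const, nsmul_one, if_true,
      if_neg (G.notMem_neighborFinset_self u)]
    ring
  · rw [sum_edgeFinset_memSign_mul_memSign G huv, if_neg huv]
    split_ifs <;> ring

lemma sum_sum_edgeFinset_memSign_mul_memSign_cube :
    ∑ u, ∑ v, (∑ e ∈ G.edgeFinset, memSign e.toFinset u * memSign e.toFinset v) ^ 3 =
      (Fintype.card V : ℝ) ^ 2 * #G.edgeFinset ^ 3 -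
        Fintype.card V * (24 * #G.edgeFinset ^ 3 - 24 * #G.edgeFinset * degPowSum G 2 +
          16 * degPowSum G 3) +
        144 * #G.edgeFinset ^ 3 - 240 * #G.edgeFinset * degPowSum G 2 + 160 * degPowSum G 3 +
        96 * dartDegProd G + 96 * #G.edgeFinset ^ 2 - 64 * #G.edgeFinset := by
  simp only [sum_edgeFinset_memSign_mul_memSign_cube, sum_add_distrib, sum_ite_eq, mem_univ,
    if_true, sum_ite_mem, univ_inter]
  set m : ℝ := (#G.edgeFinset : ℝ) with hm
  have diagonal : ∑ v, (m ^ 3 - (m - 4 * (G.degree v : ℝ)) ^ 3) =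
      24 * m ^ 3 - 48 * m * degPowSum G 2 + 64 * degPowSum G 3 := by
    have expand (x : ℝ) : m ^ 3 - (m - 4 * x) ^ 3 =
        12 * m ^ 2 * x ^ 1 - 48 * m * x ^ 2 + 64 * x ^ 3 := by ring
    simp only [expand, sum_add_distrib, sum_sub_distrib, ← mul_sum, sum_degree_pow,
      degPowSum_one, ← hm]
    ring
  have adjacent : ∑ u, ∑ v ∈ G.neighborFinset u,
      ((m - 2 * ((G.degree u : ℝ) + G.degree v) + 4) ^ 3 -
        (m - 2 * ((G.degree u : ℝ) + G.degree v)) ^ 3) =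
      24 * m ^ 3 - 96 * m * degPowSum G 2 + 96 * degPowSum G 3 + 96 * dartDegProd G +
        96 * m ^ 2 - 64 * m := by
    have expand (s : ℝ) : (m - 2 * s + 4) ^ 3 - (m - 2 * s) ^ 3 =
        (12 * m ^ 2 + 48 * m + 64) + -(48 * m + 96) * s + 48 * s ^ 2 := by ring
    simp only [expand, sum_neighborFinset_degree_add_degree_quadratic]
    ring
  rw [sum_sum_sub_degree_add_degree_cube, ← hm, diagonal, adjacent]
  ring

end EdgeSigns

section SymmDiffCard

variable {V : Type*} [DecidableEq V]

lemma card_symmDiff_add_two_mul_card_inter (A B : Finset V) :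
    #(A ∆ B) + 2 * #(A ∩ B) = #A + #B := by
  rw [symmDiff_def, sup_eq_union, card_union_of_disjoint disjoint_sdiff_sdiff]
  grind

lemma toFinset_symmDiff_toFinset_eq_empty_iff {e f : Sym2 V} :
    e.toFinset ∆ f.toFinset = ∅ ↔ e = f := by
  rw [← bot_eq_empty, symmDiff_eq_bot]
  refine ⟨fun h => Sym2.ext fun v => ?_, congrArg _⟩
  rw [← Sym2.mem_toFinset, h, Sym2.mem_toFinset]

lemma toFinset_symmDiff_triangle {u v w : V} (huv : u ≠ v) (huw : u ≠ w) (hvw : v ≠ w) :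
    s(v, w).toFinset ∆ s(u, w).toFinset ∆ s(u, v).toFinset = ∅ := by
  ext x
  simp only [mem_symmDiff, Sym2.mem_toFinset, Sym2.mem_iff, notMem_empty]
  grind

lemma exists_triangle_of_toFinset_symmDiff_eq_empty {e f g : Sym2 V} (he : ¬ e.IsDiag)
    (hf : ¬ f.IsDiag) (hg : ¬ g.IsDiag) (h : e.toFinset ∆ f.toFinset ∆ g.toFinset = ∅) :
    ∃ u v w, e = s(v, w) ∧ f = s(u, w) ∧ g = s(u, v) := by
  have parity (x : V) : x ∈ g ↔ ¬ (x ∈ e ↔ x ∈ f) := by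
    have := Finset.ext_iff.1 h x
    simp only [mem_symmDiff, Sym2.mem_toFinset, notMem_empty] at this
    tauto
  induction e with | _ a b
  induction f with | _ c d
  induction g with | _ u v
  have parity_a := parity a
  have parity_b := parity b
  have parity_c := parity c
  have parity_d := parity d
  have parity_u := parity u
  have parity_v := parity v
  by_contra! no_triangle
  -- the third vertex is an endpoint of `e`, and `u`, `v` are the other two in some order
  have uva := no_triangle u v a
  have uvb := no_triangle u v b
  have vua := no_triangle v u a
  have vub := no_triangle v u b
  clear no_triangle parity h
  simp only [Sym2.mem_iff, Sym2.mk_isDiag_iff, Sym2.eq_iff] at *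
  grind (splits := 30)

end SymmDiffCard

section SymmDiffCounts

lemma sum_eq_sum_card_filter_mul {ι : Type*} {s : Finset ι} {f : ι → ℕ} {t : Finset ℕ}
    (hf : ∀ i ∈ s, f i ∈ t) (F : ℕ → ℝ) :
    ∑ i ∈ s, F (f i) = ∑ k ∈ t, #{i ∈ s | f i = k} * F k := by
  rw [← sum_fiberwise_of_maps_to' hf]
  simp only [sum_const, nsmul_eq_mul]

variable {V : Type*} [Fintype V] [DecidableEq V] (G : SimpleGraph V) [DecidableRel G.Adj]

/-- The number of ordered pairs of edges of `G` whose endpoint sets have a symmetric difference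
of size `k`. -/
def pairCount (k : ℕ) : ℕ :=
  #{p ∈ G.edgeFinset ×ˢ G.edgeFinset | #(p.1.toFinset ∆ p.2.toFinset) = k}

/-- The number of ordered triples of edges of `G` whose endpoint sets have a symmetric difference
of size `k`. -/
def tripleCount (k : ℕ) : ℕ :=
  #{p ∈ G.edgeFinset ×ˢ G.edgeFinset ×ˢ G.edgeFinset |
    #(p.1.toFinset ∆ p.2.1.toFinset ∆ p.2.2.toFinset) = k}

/-- The number of common neighbours of `u` and `v`, summed over the ordered pairs of adjacent
vertices `u`, `v`; equivalently, the number of ordered triangles. -/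
def dartCommonNbr : ℕ := ∑ u, ∑ v ∈ G.neighborFinset u, #(G.neighborFinset u ∩ G.neighborFinset v)

variable {G} in
lemma card_toFinset_of_mem_edgeFinset {e : Sym2 V} (he : e ∈ G.edgeFinset) : #e.toFinset = 2 :=
  G.card_toFinset_mem_edgeFinset ⟨e, he⟩

lemma sum_pair_eq_sum_pairCount (F : ℕ → ℝ) :
    ∑ p ∈ G.edgeFinset ×ˢ G.edgeFinset, F #(p.1.toFinset ∆ p.2.toFinset) =
      pairCount G 0 * F 0 + pairCount G 2 * F 2 + pairCount G 4 * F 4 := by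
  have card_mem : ∀ p ∈ G.edgeFinset ×ˢ G.edgeFinset,
      #(p.1.toFinset ∆ p.2.toFinset) ∈ ({0, 2, 4} : Finset ℕ) := fun p hp => by
    have := card_symmDiff_add_two_mul_card_inter p.1.toFinset p.2.toFinset
    have := card_toFinset_of_mem_edgeFinset (mem_product.1 hp).1
    have := card_toFinset_of_mem_edgeFinset (mem_product.1 hp).2
    simp only [mem_insert, mem_singleton]
    lia
  rw [sum_eq_sum_card_filter_mul card_mem]
  simp [pairCount, add_assoc]

lemma sum_triple_eq_sum_tripleCount (F : ℕ → ℝ) :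
    ∑ p ∈ G.edgeFinset ×ˢ G.edgeFinset ×ˢ G.edgeFinset,
        F #(p.1.toFinset ∆ p.2.1.toFinset ∆ p.2.2.toFinset) =
      tripleCount G 0 * F 0 + tripleCount G 2 * F 2 + tripleCount G 4 * F 4 +
        tripleCount G 6 * F 6 := by
  have card_mem : ∀ p ∈ G.edgeFinset ×ˢ G.edgeFinset ×ˢ G.edgeFinset,
      #(p.1.toFinset ∆ p.2.1.toFinset ∆ p.2.2.toFinset) ∈ ({0, 2, 4, 6} : Finset ℕ) :=
    fun p hp => by
    obtain ⟨he, hf, hg⟩ : p.1 ∈ G.edgeFinset ∧ p.2.1 ∈ G.edgeFinset ∧ p.2.2 ∈ G.edgeFinset := by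
      simpa only [mem_product] using hp
    have := card_symmDiff_add_two_mul_card_inter p.1.toFinset p.2.1.toFinset
    have := card_symmDiff_add_two_mul_card_inter (p.1.toFinset ∆ p.2.1.toFinset) p.2.2.toFinset
    have := card_toFinset_of_mem_edgeFinset he
    have := card_toFinset_of_mem_edgeFinset hf
    have := card_toFinset_of_mem_edgeFinset hg
    simp only [mem_insert, mem_singleton]
    lia
  rw [sum_eq_sum_card_filter_mul card_mem]
  simp [tripleCount, add_assoc]

lemma sum_card_symmDiff_edgeFinset :
    ∑ p ∈ G.edgeFinset ×ˢ G.edgeFinset, (#(p.1.toFinset ∆ p.2.toFinset) : ℝ) =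
      4 * #G.edgeFinset ^ 2 - 2 * degPowSum G 2 := by
  have expand (m x : ℝ) : (m - 2 * x) ^ 2 = m ^ 2 * x ^ 0 - 4 * m * x ^ 1 + 4 * x ^ 2 := by ring
  have double_count := sum_card_sub_two_mul_card_symmDiff G.edgeFinset Sym2.toFinset
  simp only [sum_edgeFinset_memSign, expand, sum_add_distrib, sum_sub_distrib, ← mul_sum,
    sum_degree_pow, degPowSum_zero, degPowSum_one, sum_const, card_product, nsmul_eq_mul,
    Nat.cast_mul] at double_count
  linear_combination -double_count / 2

lemma sum_card_symmDiff_symmDiff_edgeFinset :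
    ∑ p ∈ G.edgeFinset ×ˢ G.edgeFinset ×ˢ G.edgeFinset,
        (#(p.1.toFinset ∆ p.2.1.toFinset ∆ p.2.2.toFinset) : ℝ) =
      6 * #G.edgeFinset ^ 3 - 6 * #G.edgeFinset * degPowSum G 2 + 4 * degPowSum G 3 := by
  have expand (m x : ℝ) : (m - 2 * x) ^ 3 =
    m ^ 3 * x ^ 0 - 6 * m ^ 2 * x ^ 1 + 12 * m * x ^ 2 - 8 * x ^ 3 := by ring
  have double_count := sum_card_sub_two_mul_card_symmDiff_symmDiff G.edgeFinset Sym2.toFinset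
  simp only [sum_edgeFinset_memSign, expand, sum_add_distrib, sum_sub_distrib, ← mul_sum,
    sum_degree_pow, degPowSum_zero, degPowSum_one, sum_const, card_product, nsmul_eq_mul,
    Nat.cast_mul] at double_count
  linear_combination -double_count / 2

lemma sum_card_symmDiff_symmDiff_edgeFinset_sq :
    ∑ p ∈ G.edgeFinset ×ˢ G.edgeFinset ×ˢ G.edgeFinset,
        (#(p.1.toFinset ∆ p.2.1.toFinset ∆ p.2.2.toFinset) : ℝ) ^ 2 =
      36 * #G.edgeFinset ^ 3 - 60 * #G.edgeFinset * degPowSum G 2 + 40 * degPowSum G 3 +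
        24 * dartDegProd G + 24 * #G.edgeFinset ^ 2 - 16 * #G.edgeFinset := by
  have expand (k : ℝ) : ((Fintype.card V : ℝ) - 2 * k) ^ 2 =
    (Fintype.card V : ℝ) ^ 2 - 4 * Fintype.card V * k + 4 * k ^ 2 := by ring
  have double_count := sum_card_sub_two_mul_card_symmDiff_symmDiff_sq G.edgeFinset Sym2.toFinset
  simp only [sum_sum_edgeFinset_memSign_mul_memSign_cube, expand, sum_add_distrib,
    sum_sub_distrib, ← mul_sum, sum_card_symmDiff_symmDiff_edgeFinset, sum_const, card_product,
    nsmul_eq_mul, Nat.cast_mul] at double_count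
  linear_combination double_count / 4

lemma pairCount_zero : pairCount G 0 = #G.edgeFinset := by
  simp only [pairCount, card_eq_zero, toFinset_symmDiff_toFinset_eq_empty_iff]
  rw [← diag_card G.edgeFinset, ← diag_eq_filter]

lemma tripleCount_zero : tripleCount G 0 = dartCommonNbr G := by
  simp only [tripleCount, dartCommonNbr, card_eq_zero, ← card_sigma]
  symm
  refine card_bij (fun p _ => (s(p.2.1, p.2.2), s(p.1, p.2.2), s(p.1, p.2.1))) ?maps ?inj ?surj
  case maps =>
    rintro ⟨u, v, w⟩ h
    obtain ⟨huv, huw, hvw⟩ : G.Adj u v ∧ G.Adj u w ∧ G.Adj v w := by simpa using h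
    exact mem_filter.2 ⟨by simp [huv, huw, hvw], toFinset_symmDiff_triangle huv.ne huw.ne hvw.ne⟩
  case inj =>
    rintro ⟨u, v, w⟩ h ⟨u', v', w'⟩ - heq
    obtain ⟨huv, huw, hvw⟩ : G.Adj u v ∧ G.Adj u w ∧ G.Adj v w := by simpa using h
    have := huv.ne
    have := huw.ne
    have := hvw.ne
    simp only [Prod.mk.injEq, Sym2.eq_iff] at heq
    grind
  case surj =>
    rintro ⟨e, f, g⟩ h
    obtain ⟨⟨he, hf, hg⟩, hefg⟩ : (e ∈ G.edgeSet ∧ f ∈ G.edgeSet ∧ g ∈ G.edgeSet) ∧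
        e.toFinset ∆ f.toFinset ∆ g.toFinset = ∅ := by simpa using h
    obtain ⟨u, v, w, rfl, rfl, rfl⟩ := exists_triangle_of_toFinset_symmDiff_eq_empty
      (G.not_isDiag_of_mem_edgeSet he) (G.not_isDiag_of_mem_edgeSet hf)
      (G.not_isDiag_of_mem_edgeSet hg) hefg
    exact ⟨⟨u, v, w⟩, by simp_all, rfl⟩

lemma pairCount_linear (a b : ℝ) :
    pairCount G 0 * a + pairCount G 2 * (a + 2 * b) + pairCount G 4 * (a + 4 * b) =
      a * #G.edgeFinset ^ 2 + b * (4 * #G.edgeFinset ^ 2 - 2 * degPowSum G 2) := by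
  have count := sum_pair_eq_sum_pairCount G fun k => a + b * k
  simp only [sum_add_distrib, ← mul_sum, sum_card_symmDiff_edgeFinset, sum_const, card_product,
    nsmul_eq_mul] at count
  push_cast at count
  linear_combination -count

lemma pairCount_two : (pairCount G 2 : ℝ) = degPowSum G 2 - 2 * #G.edgeFinset := by
  have h₀ : (pairCount G 0 : ℝ) = #G.edgeFinset := by rw [pairCount_zero]
  -- the weight `4 - k` vanishes at `k = 4`
  linear_combination pairCount_linear G 4 (-1) / 2 - 2 * h₀

lemma pairCount_four :
    (pairCount G 4 : ℝ) = #G.edgeFinset ^ 2 + #G.edgeFinset - degPowSum G 2 := by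
  have h₀ : (pairCount G 0 : ℝ) = #G.edgeFinset := by rw [pairCount_zero]
  linear_combination -pairCount_linear G 2 (-1) / 2 + h₀

lemma tripleCount_quadratic (a b c : ℝ) :
    tripleCount G 0 * a + tripleCount G 2 * (a + 2 * b + 4 * c) +
        tripleCount G 4 * (a + 4 * b + 16 * c) + tripleCount G 6 * (a + 6 * b + 36 * c) =
      a * #G.edgeFinset ^ 3 +
        b * (6 * #G.edgeFinset ^ 3 - 6 * #G.edgeFinset * degPowSum G 2 + 4 * degPowSum G 3) +
        c * (36 * #G.edgeFinset ^ 3 - 60 * #G.edgeFinset * degPowSum G 2 + 40 * degPowSum G 3 +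
          24 * dartDegProd G + 24 * #G.edgeFinset ^ 2 - 16 * #G.edgeFinset) := by
  have count := sum_triple_eq_sum_tripleCount G fun k => a + b * k + c * k ^ 2
  simp only [sum_add_distrib, ← mul_sum, sum_card_symmDiff_symmDiff_edgeFinset,
    sum_card_symmDiff_symmDiff_edgeFinset_sq, sum_const, card_product, nsmul_eq_mul] at count
  push_cast at count
  linear_combination -count

lemma tripleCount_two : (tripleCount G 2 : ℝ) =
    3 * dartDegProd G + 3 * #G.edgeFinset ^ 2 - 2 * #G.edgeFinset - 3 * dartCommonNbr G := by
  have h₀ : (tripleCount G 0 : ℝ) = dartCommonNbr G := by rw [tripleCount_zero]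
  -- the weight `(4 - k) (6 - k)` vanishes at `k = 4` and `k = 6`
  linear_combination tripleCount_quadratic G 24 (-10) 1 / 8 - 3 * h₀

lemma tripleCount_four : (tripleCount G 4 : ℝ) =
    3 * #G.edgeFinset * degPowSum G 2 - 2 * degPowSum G 3 - 6 * dartDegProd G -
      6 * #G.edgeFinset ^ 2 + 4 * #G.edgeFinset + 3 * dartCommonNbr G := by
  have h₀ : (tripleCount G 0 : ℝ) = dartCommonNbr G := by rw [tripleCount_zero]
  linear_combination -tripleCount_quadratic G 12 (-8) 1 / 4 + 3 * h₀

lemma tripleCount_six : (tripleCount G 6 : ℝ) =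
    #G.edgeFinset ^ 3 - 3 * #G.edgeFinset * degPowSum G 2 + 2 * degPowSum G 3 +
      3 * dartDegProd G + 3 * #G.edgeFinset ^ 2 - 2 * #G.edgeFinset - dartCommonNbr G := by
  have h₀ : (tripleCount G 0 : ℝ) = dartCommonNbr G := by rw [tripleCount_zero]
  linear_combination tripleCount_quadratic G 8 (-6) 1 / 8 - h₀

end SymmDiffCounts

section ThirdMoment

variable {V : Type*} [Fintype V] [DecidableEq V] (G : SimpleGraph V) [DecidableRel G.Adj]

lemma expect_perm_sum_one_sub_prod_div_two_cube {x : V → ℝ} (hx : ∀ v, x v * x v = 1) :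
    𝔼 π : Equiv.Perm V, (∑ e ∈ G.edgeFinset, (1 - ∏ v ∈ e.toFinset, x (π v)) / 2) ^ 3 =
      (#G.edgeFinset ^ 3 - 3 * #G.edgeFinset ^ 3 * meanProd x 2 +
        3 * #G.edgeFinset * (pairCount G 0 + pairCount G 2 * meanProd x 2 +
          pairCount G 4 * meanProd x 4) -
        (tripleCount G 0 + tripleCount G 2 * meanProd x 2 + tripleCount G 4 * meanProd x 4 +
          tripleCount G 6 * meanProd x 6)) / 8 := by
  have expand (π : Equiv.Perm V) :
      (∑ e ∈ G.edgeFinset, (1 - ∏ v ∈ e.toFinset, x (π v)) / 2) ^ 3 =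
        (#G.edgeFinset ^ 3 - 3 * #G.edgeFinset ^ 2 * ∑ e ∈ G.edgeFinset, ∏ v ∈ e.toFinset, x (π v) +
          3 * #G.edgeFinset * (∑ e ∈ G.edgeFinset, ∏ v ∈ e.toFinset, x (π v)) ^ 2 -
          (∑ e ∈ G.edgeFinset, ∏ v ∈ e.toFinset, x (π v)) ^ 3) / 8 := by
    rw [← sum_div, sum_sub_distrib, sum_const, nsmul_one]
    ring
  have mean_edge : ∑ e ∈ G.edgeFinset, meanProd x #e.toFinset = #G.edgeFinset * meanProd x 2 := by
    rw [sum_congr rfl fun e he => by rw [card_toFinset_of_mem_edgeFinset he], sum_const,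
      nsmul_eq_mul]
  simp only [expand, ← expect_div, expect_sub_distrib, expect_add_distrib, ← mul_expect,
    Fintype.expect_const, expect_perm_sum_prod, expect_perm_sum_prod_sq _ _ hx,
    expect_perm_sum_prod_cube _ _ hx, mean_edge, sum_pair_eq_sum_pairCount,
    sum_triple_eq_sum_tripleCount, meanProd_zero]
  ring

end ThirdMoment

section LabelSigns

/-- The sign recording the group of a label `i + 1 ∈ {1, …, n}`: it is `-1` if the label is at most
`t` and `1` otherwise. -/
noncomputable def labelSign (n t : ℕ) : Fin n → ℝ := memSign {i : Fin n | i < t}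

lemma labelSign_mul_self (n t : ℕ) (i : Fin n) : labelSign n t i * labelSign n t i = 1 :=
  memSign_mul_self _ i

variable {n t : ℕ}

lemma sum_labelSign (ht : t ≤ n) : ∑ i, labelSign n t i = n - 2 * t := by
  rw [labelSign, sum_memSign, Fin.card_filter_val_lt, min_eq_right ht, Fintype.card_fin]

lemma meanProd_labelSign_one (ht : t ≤ n) (hn : 0 < n) :
    meanProd (labelSign n t) 1 = (n - 2 * t) / n := by
  have recurrence := meanProd_recurrence (labelSign_mul_self n t) (Nat.zero_le _)
  simp only [Fintype.card_fin, CharP.cast_eq_zero, sub_zero, zero_mul, add_zero, zero_add,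
    sum_labelSign ht, meanProd_zero, mul_one] at recurrence
  rw [← recurrence, mul_div_cancel_left₀ _ (by positivity)]

lemma meanProd_labelSign_add_two (ht : t ≤ n) {k : ℕ} (hk : k + 1 < n) :
    meanProd (labelSign n t) (k + 2) =
      ((n - 2 * t) * meanProd (labelSign n t) (k + 1) -
        (k + 1 : ℕ) * meanProd (labelSign n t) k) / (n - (k + 1 : ℕ)) := by
  have hk' : (n : ℝ) - (k + 1 : ℕ) ≠ 0 := sub_ne_zero.2 (by exact_mod_cast hk.ne')
  have recurrence :=
    meanProd_recurrence (labelSign_mul_self n t) (k := k + 1) (by simpa using hk.le)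
  simp only [Fintype.card_fin, Nat.add_sub_cancel, sum_labelSign ht] at recurrence
  rw [eq_div_iff hk']
  linear_combination recurrence

lemma meanProd_labelSign_two (ht : t ≤ n) (hn : 2 ≤ n) :
    meanProd (labelSign n t) 2 = 1 - 2 * p1 n t := by
  have hn' : (2 : ℝ) ≤ n := by exact_mod_cast hn
  have : (n : ℝ) ≠ 0 := by linarith
  have : (n : ℝ) - 1 ≠ 0 := by linarith
  rw [meanProd_labelSign_add_two ht (by lia), meanProd_labelSign_one ht (by lia), meanProd_zero,
    p1]
  simp only [zero_add, Nat.cast_one]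
  field_simp
  ring

lemma meanProd_labelSign_four (ht : t ≤ n) (hn : 4 ≤ n) :
    meanProd (labelSign n t) 4 = 1 - 4 * p1 n t + 4 * p2 n t := by
  have hn' : (4 : ℝ) ≤ n := by exact_mod_cast hn
  have : (n : ℝ) ≠ 0 := by linarith
  have : (n : ℝ) - 1 ≠ 0 := by linarith
  have : (n : ℝ) - 2 ≠ 0 := by linarith
  have : (n : ℝ) - 3 ≠ 0 := by linarith
  rw [meanProd_labelSign_add_two ht (by lia), meanProd_labelSign_add_two ht (by lia),
    meanProd_labelSign_two ht (by lia), meanProd_labelSign_one ht (by lia), p1, p2]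
  simp only [Nat.reduceAdd, Nat.cast_ofNat]
  field_simp
  ring

lemma meanProd_labelSign_six (ht : t ≤ n) (hn : 6 ≤ n) :
    meanProd (labelSign n t) 6 = 1 - 6 * p1 n t + 12 * p2 n t - 8 * p4 n t := by
  have hn' : (6 : ℝ) ≤ n := by exact_mod_cast hn
  have : (n : ℝ) ≠ 0 := by linarith
  have : (n : ℝ) - 1 ≠ 0 := by linarith
  have : (n : ℝ) - 2 ≠ 0 := by linarith
  have : (n : ℝ) - 3 ≠ 0 := by linarith
  have : (n : ℝ) - 4 ≠ 0 := by linarith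
  have : (n : ℝ) - 5 ≠ 0 := by linarith
  rw [meanProd_labelSign_add_two ht (by lia), meanProd_labelSign_add_two ht (by lia),
    meanProd_labelSign_four ht (by lia), meanProd_labelSign_add_two ht (by lia),
    meanProd_labelSign_two ht (by lia), meanProd_labelSign_one ht (by lia), p1, p2, p4]
  simp only [Nat.reduceAdd, Nat.cast_ofNat]
  field_simp
  ring

lemma p3_eq_half_sub (hn : 4 ≤ n) : p3 n t = (p1 n t - p2 n t) / 2 := by
  have hn' : (4 : ℝ) ≤ n := by exact_mod_cast hn
  have : (n : ℝ) ≠ 0 := by linarith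
  have : (n : ℝ) - 1 ≠ 0 := by linarith
  have : (n : ℝ) - 2 ≠ 0 := by linarith
  have : (n : ℝ) - 3 ≠ 0 := by linarith
  rw [p1, p2, p3]
  field_simp
  ring

end LabelSigns

section PermutationNull

variable {n : ℕ} (G : SimpleGraph (Fin n)) [DecidableRel G.Adj]

lemma edgeFS_eq_edgeFinset : edgeFS G = G.edgeFinset := by
  ext e
  simp [edgeFS]

lemma numEdges_eq_card_edgeFinset : numEdges G = #G.edgeFinset := by
  rw [numEdges, edgeFS_eq_edgeFinset]

lemma nbrFS_eq_neighborFinset (i : Fin n) : nbrFS G i = G.neighborFinset i := by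
  ext j
  simp [nbrFS]

lemma deg_eq_degree (i : Fin n) : deg G i = G.degree i := by
  unfold deg
  convert rfl

lemma two_mul_edgeDegProd : 2 * edgeDegProd G = dartDegProd G := by
  rw [edgeDegProd, edgeFS_eq_edgeFinset, two_mul, ← two_nsmul, ← sum_neighborFinset_sym2]
  simp only [dartDegProd, Sym2.lift_mk, deg_eq_degree]

lemma two_mul_edgeCommonNbr : 2 * edgeCommonNbr G = dartCommonNbr G := by
  rw [edgeCommonNbr, edgeFS_eq_edgeFinset, two_mul, ← two_nsmul, ← sum_neighborFinset_sym2]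
  simp [dartCommonNbr, Sym2.lift_mk, nbrFS_eq_neighborFinset]

lemma permExp_eq_expect (X : Equiv.Perm (Fin n) → ℝ) : permExp n X = 𝔼 π, X π := by
  rw [permExp, Fintype.expect_eq_sum_div_card, Fintype.card_perm, Fintype.card_fin]

lemma crossInd_gOne {t : ℕ} {f : Fin n → Fin n} {e : Sym2 (Fin n)} (he : ¬ e.IsDiag) :
    crossInd (gOne n t f) e = (1 - ∏ v ∈ e.toFinset, labelSign n t (f v)) / 2 := by
  induction e with | _ u v
  have huv : u ≠ v := by simpa using he
  by_cases hu : f u < t <;> by_cases hv : f v < t <;>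
    simp [crossInd, gOne, labelSign, memSign, Sym2.toFinset_mk_eq, huv, hu, hv] <;> lia

lemma Rone_eq_sum_one_sub_prod_div_two (t : ℕ) (π : Equiv.Perm (Fin n)) :
    Rone G t π = ∑ e ∈ G.edgeFinset, (1 - ∏ v ∈ e.toFinset, labelSign n t (π v)) / 2 := by
  rw [Rone, RoneF, edgeFS_eq_edgeFinset]
  exact sum_congr rfl fun e he => crossInd_gOne (G.not_isDiag_of_mem_edgeFinset he)

end PermutationNull

/-- Lemma 4: explicit expression for `E[R_G(t)³]` under the permutation null. -/
theorem third_moment_R_one (n : ℕ) (hn : 6 ≤ n) (G : SimpleGraph (Fin n))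
    (t : ℕ) (ht1 : 1 ≤ t) (ht2 : t ≤ n - 1) :
    permExp n (fun π => (Rone G t π) ^ 3) =
      p1 n t * numEdges G
        + 3 / 2 * p1 n t * ∑ i : Fin n, (deg G i : ℝ) * ((deg G i : ℝ) - 1)
        + 3 * p2 n t * (numEdges G * (numEdges G - 1)
            + 1 / 2 * ∑ i : Fin n,
                (deg G i : ℝ) * ((deg G i : ℝ) - 1) * (numEdges G - (deg G i : ℝ)))
        - 3 * p2 n t * ((∑ i : Fin n, (deg G i : ℝ) * ((deg G i : ℝ) - 1)) + edgeDegProd G)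
        + p3 n t * ∑ i : Fin n, (deg G i : ℝ) * ((deg G i : ℝ) - 1) * ((deg G i : ℝ) - 2)
        + p4 n t * (numEdges G * (numEdges G - 1) * (numEdges G - 2) + 6 * edgeDegProd G)
        - 2 * p4 n t * edgeCommonNbr G
        - p4 n t * ∑ i : Fin n,
            (deg G i : ℝ) * ((deg G i : ℝ) - 1) * (3 * numEdges G - 2 * (deg G i : ℝ) - 2) := by
  classical
  have ht : t ≤ n := by lia
  simp only [deg_eq_degree, numEdges_eq_card_edgeFinset, permExp_eq_expect,
    Rone_eq_sum_one_sub_prod_div_two]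
  rw [expect_perm_sum_one_sub_prod_div_two_cube G (labelSign_mul_self n t),
    meanProd_labelSign_two ht (by lia), meanProd_labelSign_four ht (by lia),
    meanProd_labelSign_six ht hn, p3_eq_half_sub (by lia),
    pairCount_zero, pairCount_two, pairCount_four,
    tripleCount_zero, tripleCount_two, tripleCount_four, tripleCount_six,
    ← two_mul_edgeDegProd, ← two_mul_edgeCommonNbr, sum_degree_mul_degree_sub_one,
    sum_degree_mul_degree_sub_one_mul_of_affine (f := (· - 2)) (a := -2) (b := 1) (by grind),
    sum_degree_mul_degree_sub_one_mul_of_affine (f := (#G.edgeFinset - ·)) (a := #G.edgeFinset)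
      (b := -1) (by grind),
    sum_degree_mul_degree_sub_one_mul_of_affine (f := (3 * #G.edgeFinset - 2 * · - 2))
      (a := 3 * #G.edgeFinset - 2) (b := -2) (by grind)]
  ring

end GraphCP
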